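/- Let A and B be finite sets of positive integers with |A| <= |B|, and work over the polynomial ring K[u_{ij} : i > j >= 1] over a field K. Let g_{AB} be the Pfaffian of the (|B|+|A|) x (|B|+|A|) skew-symmetric matrix whose rows and columns are indexed by the elements of B in increasing order followed by the elements of A in increasing order, with entry U^ss_{xy} at a position labeled (x,y) except that the entry is 0 whenever both labels come from the A-block. Then g_{AB} = sum, over all subsets S of A \ B such that |B| + |S| and |A| - |S| are both even, of (-1)^{(|A|-|S|)/2} * <A,S> * <B union S, S> * pf(U^ss_{A\S, A\S}) * pf(U^ss_{B union S, B union S}), where for a finite set T = {t_1 < ... < t_m} and S subset of T, <T,S> := (-1)^{|S|*|T| + |S|(|S|-1)/2 + (sum of the indices i in [m] with t_i in S)}. (The omitted terms, with |B|+|S| even but |A|-|S| odd, vanish because the Pfaffian of an odd-size matrix is 0.) -/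

import Mathlib

namespace Paper

/-!
We model a permutation of the positive integers `{1, 2, 3, ...}` as an `Equiv.Perm ℕ`
that fixes `0`; all notions below refer only to positive inputs.
-/

/-- The rank `r_w(i,j) = #{a ∈ [i] : w(a) ∈ [j]}` of the `i × j` partial
permutation matrix of `w`, where `[k] = {1, ..., k}`. -/
def rnk (w : Equiv.Perm ℕ) (i j : ℕ) : ℕ :=
  ((Finset.Icc 1 i).filter fun a => w a ∈ Finset.Icc 1 j).card

/-- Right descent set `Des_R(w) = {i ≥ 1 : w(i) > w(i+1)}`. -/
def DesR (w : Equiv.Perm ℕ) : Set ℕ := {i | 1 ≤ i ∧ w (i + 1) < w i}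

/-- Left descent set `Des_L(w) = Des_R(w⁻¹)`. -/
def DesL (w : Equiv.Perm ℕ) : Set ℕ := DesR w⁻¹

/-- `S_∞`: permutations of the positive integers fixing all but finitely many points. -/
def SInfty : Set (Equiv.Perm ℕ) :=
  {w | w 0 = 0 ∧ Set.Finite {i : ℕ | w i ≠ i}}

/-- `S^{m,n}_∞ = {w ∈ S_∞ : Des_R(w) ⊆ [m], Des_L(w) ⊆ [n]}`. -/
def SmnInfty (m n : ℕ) : Set (Equiv.Perm ℕ) :=
  {w | w ∈ SInfty ∧ DesR w ⊆ Set.Icc 1 m ∧ DesL w ⊆ Set.Icc 1 n}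

/-- The Rothe diagram `D(w) = {(i,j) : 0 < j < w(i), 0 < i < w⁻¹(j)}`. -/
def Rothe (w : Equiv.Perm ℕ) : Set (ℕ × ℕ) :=
  {p | 0 < p.2 ∧ p.2 < w p.1 ∧ 0 < p.1 ∧ p.1 < w⁻¹ p.2}

/-- The function `1_FPF`, sending `i ↦ i - (-1)^i` on positive integers (it fixes `0`). -/
def oneFPF : ℕ → ℕ := fun i => if i % 2 = 1 then i + 1 else i - 1

/-- `I^FPF_∞`: fixed-point-free involutions of the positive integers agreeing with
`1_FPF` at all sufficiently large inputs. -/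
def IFPFInfty : Set (Equiv.Perm ℕ) :=
  {z | z 0 = 0 ∧ (∀ i, 1 ≤ i → z i ≠ i) ∧ z * z = 1 ∧ ∃ N, ∀ i, N ≤ i → z i = oneFPF i}

/-- The skew-symmetric Rothe diagram `D^ss(z) = {(i,j) : 0 < j < z(i), j < i < z(j)}`. -/
def Dss (z : Equiv.Perm ℕ) : Set (ℕ × ℕ) :=
  {p | 0 < p.2 ∧ p.2 < z p.1 ∧ p.2 < p.1 ∧ p.1 < z p.2}

/-- `FPF_n(I_n) = {z ∈ I^FPF_∞ : D^ss(z) ⊆ [n] × [n]}`. -/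
def FPFIn (n : ℕ) : Set (Equiv.Perm ℕ) :=
  {z | z ∈ IFPFInfty ∧ Dss z ⊆ Set.Icc 1 n ×ˢ Set.Icc 1 n}

/-- `ℓ_fpf(z) = |D^ss(z)|`. -/
noncomputable def ellFpf (z : Equiv.Perm ℕ) : ℕ := (Dss z).ncard

/-- Bruhat order on `I^FPF_∞`: reflexive-transitive closure of `z < (i,j) z (i,j)`
whenever `i < j` and `ℓ_fpf` goes up by exactly one. -/
def fpfBruhatLe (z y : Equiv.Perm ℕ) : Prop :=
  Relation.ReflTransGen
    (fun a b => ∃ i j : ℕ, 1 ≤ i ∧ i < j ∧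
      b = Equiv.swap i j * a * Equiv.swap i j ∧ ellFpf b = ellFpf a + 1) z y

/-- `i` is a visible descent of `z` if `i ≥ 1` and `z(i+1) < min(i, z(i))`. -/
def visibleDescent (z : Equiv.Perm ℕ) (i : ℕ) : Prop :=
  1 ≤ i ∧ z (i + 1) < min i (z i)

/-- `Ψ(z, p) = {(p,r) z (p,r) : r > p, ℓ_fpf((p,r) z (p,r)) = ℓ_fpf(z) + 1}`. -/
def PsiSet (z : Equiv.Perm ℕ) (p : ℕ) : Set (Equiv.Perm ℕ) :=
  {y | ∃ r : ℕ, p < r ∧ y = Equiv.swap p r * z * Equiv.swap p r ∧ ellFpf y = ellFpf z + 1}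

/-- The dominant component `dom(z) = {(i,j) : i, j ≥ 1, r_z(i,j) = 0}`. -/
def domSet (z : Equiv.Perm ℕ) : Set (ℕ × ℕ) :=
  {p | 1 ≤ p.1 ∧ 1 ≤ p.2 ∧ rnk z p.1 p.2 = 0}

/-- `(p, q)` is an outer corner of `dom(z)`. -/
def IsOuterCorner (z : Equiv.Perm ℕ) (p q : ℕ) : Prop :=
  1 ≤ p ∧ 1 ≤ q ∧ (p, q) ∉ domSet z ∧
    (p = 1 ∨ (p - 1, q) ∈ domSet z) ∧ (q = 1 ∨ (p, q - 1) ∈ domSet z)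

/-- `I_n`: involutions in `S_∞` fixing every `i > n`. -/
def InvolIn (n : ℕ) : Set (Equiv.Perm ℕ) :=
  {w | w 0 = 0 ∧ w * w = 1 ∧ ∀ i, n < i → w i = i}

/-- The fixed points of `z` lying in `[n]`. -/
def fixedPtsIn (n : ℕ) (z : Equiv.Perm ℕ) : Finset ℕ :=
  (Finset.Icc 1 n).filter fun i => z i = i

/-- The function swapping `m + 2t - 1` and `m + 2t` for every `t ≥ 1`, fixing all other points. -/
def tailSwapFun (m : ℕ) : ℕ → ℕ := fun i =>
  if i ≤ m then i else if (i - m) % 2 = 1 then i + 1 else i - 1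

theorem tailSwapFun_involutive (m : ℕ) : Function.Involutive (tailSwapFun m) := by
  intro i
  unfold tailSwapFun
  split_ifs <;> omega

/-- The involution swapping `m + 2t - 1` and `m + 2t` for every `t ≥ 1`. -/
def tailSwap (m : ℕ) : Equiv.Perm ℕ :=
  Function.Involutive.toPerm _ (tailSwapFun_involutive m)

/-- The fixed-point-free standardization `FPF_n(z) = z ⋅ (i_1,n+1)⋯(i_k,n+k) ⋅ c`,
where `i_1 < ⋯ < i_k` are the fixed points of `z` in `[n]` and `c` swaps
`n+k+2t-1, n+k+2t` for all `t ≥ 1`. -/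
noncomputable def fpfStd (n : ℕ) (z : Equiv.Perm ℕ) : Equiv.Perm ℕ :=
  z *
    (List.ofFn fun t : Fin (fixedPtsIn n z).card =>
      Equiv.swap ((fixedPtsIn n z).orderEmbOfFin rfl t) (n + (t : ℕ) + 1)).prod *
    tailSwap (n + (fixedPtsIn n z).card)

/-- `Mat^ss_n(K)`: skew-symmetric `n × n` matrices (transpose is the negative, zero diagonal).
Row/column index `a : Fin n` corresponds to the (1-indexed) row/column `a + 1`. -/
def MatSS (K : Type*) [CommRing K] (n : ℕ) : Set (Matrix (Fin n) (Fin n) K) :=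
  {A | A.transpose = -A ∧ ∀ i, A i i = 0}

/-- The skew-symmetric matrix Schubert variety
`X^ss_z = {A ∈ Mat^ss_n : rank A_{[i][j]} ≤ r_z(i,j) for all i, j ∈ [n]}`. -/
noncomputable def Xss (K : Type*) [Field K] (n : ℕ) (z : Equiv.Perm ℕ) :
    Set (Matrix (Fin n) (Fin n) K) :=
  {A | A ∈ MatSS K n ∧ ∀ (i j : ℕ) (hi : i ≤ n) (hj : j ≤ n), 1 ≤ i → 1 ≤ j →
    (A.submatrix (Fin.castLE hi) (Fin.castLE hj)).rank ≤ rnk z i j}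

/-- `#{(i,j) : i > j, j < z(i), i < z(j)}` for a permutation of `Fin N`
(the `0`-indexed version of `ℓ_fpf`). -/
def ellFpfFin {N : ℕ} (z : Equiv.Perm (Fin N)) : ℕ :=
  (Finset.univ.filter fun p : Fin N × Fin N => p.2 < p.1 ∧ p.2 < z p.1 ∧ p.1 < z p.2).card

/-- The Pfaffian of an `N × N` matrix:
`pf(A) = ∑_{z fpf involution of [N]} (-1)^{ℓ_fpf(z)} ∏_{z(i) < i} A_{z(i), i}`.
(The sum is empty, hence `0`, when `N` is odd.) -/
noncomputable def Pfaffian {R : Type*} [CommRing R] {N : ℕ} (A : Matrix (Fin N) (Fin N) R) : R :=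
  ∑ z ∈ Finset.univ.filter (fun z : Equiv.Perm (Fin N) => (∀ i, z i ≠ i) ∧ ∀ i, z (z i) = i),
    (-1 : R) ^ ellFpfFin z * ∏ i ∈ Finset.univ.filter (fun i : Fin N => z i < i), A (z i) i

/-- Index set for the variables `u_{ij}`, `n ≥ i > j ≥ 1`, of the coordinate ring
`R_n = K[Mat^ss_n]`; the variable `⟨(a, b), _⟩` is `u_{a+1, b+1}`. -/
abbrev SSVar (n : ℕ) : Type := {p : Fin n × Fin n // p.2 < p.1}

/-- The generic skew-symmetric matrix `U^ss` over `R_n`. -/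
noncomputable def Uss (K : Type*) [CommRing K] (n : ℕ) :
    Matrix (Fin n) (Fin n) (MvPolynomial (SSVar n) K) :=
  Matrix.of fun i j =>
    if h : j < i then MvPolynomial.X ⟨(i, j), h⟩
    else if h' : i < j then -MvPolynomial.X ⟨(j, i), h'⟩
    else 0

/-- The ideal of polynomials vanishing on a set `X`, where a point `A` is evaluated
via `ev A : σ → K`. -/
noncomputable def vanishingIdeal {K : Type*} [CommRing K] {σ M : Type*}
    (X : Set M) (ev : M → σ → K) : Ideal (MvPolynomial σ K) where
  carrier := {f | ∀ A ∈ X, MvPolynomial.eval (ev A) f = 0}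
  zero_mem' := by simp
  add_mem' := by
    intro f g hf hg
    simp only [Set.mem_setOf_eq] at *
    intro A hA
    rw [map_add, hf A hA, hg A hA, add_zero]
  smul_mem' := by
    intro c f hf
    simp only [Set.mem_setOf_eq] at *
    intro A hA
    rw [smul_eq_mul, map_mul, hf A hA, mul_zero]

/-- `I(X^ss_z) ⊆ R_n`, where `u_{ij}` is evaluated at `A` as `A_{ij}`. -/
noncomputable def IXss (K : Type*) [Field K] (n : ℕ) (z : Equiv.Perm ℕ) :
    Ideal (MvPolynomial (SSVar n) K) :=
  vanishingIdeal (Xss K n z) fun A v => A v.1.1 v.1.2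

/-- `pf(U^ss_{RR})` for a finite row/column set `R` (listed in increasing order). -/
noncomputable def pfUss (K : Type*) [CommRing K] {n : ℕ} (R : Finset (Fin n)) :
    MvPolynomial (SSVar n) K :=
  Pfaffian ((Uss K n).submatrix (fun s => R.orderEmbOfFin rfl s) fun t => R.orderEmbOfFin rfl t)

/-- The ideal `I^ss_z`, generated by the Pfaffians `pf(U^ss_{RR})` over all nonempty
even-size `R ⊆ [n]` such that `R ⊆ [i]` and `|R ∩ [j]| > r_z(i,j)` for some `i ≥ j`. -/
noncomputable def IssIdeal (K : Type*) [Field K] (n : ℕ) (z : Equiv.Perm ℕ) :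
    Ideal (MvPolynomial (SSVar n) K) :=
  Ideal.span {f : MvPolynomial (SSVar n) K | ∃ R : Finset (Fin n),
    R.Nonempty ∧ Even R.card ∧
    (∃ i j : ℕ, 1 ≤ j ∧ j ≤ i ∧ i ≤ n ∧ (∀ a ∈ R, (a : ℕ) + 1 ≤ i) ∧
      rnk z i j < (R.filter fun a : Fin n => (a : ℕ) + 1 ≤ j).card) ∧
    f = pfUss K R}

/-- The square-free monomial `u^ss_{AB}`: zero if `A ⊙ B` meets the diagonal, and otherwise
the product of the variables `u_{ij}` over the pairs `i > j` with `(i,j)` or `(j,i)` in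
`A ⊙ B = {(a_0, b_r), (a_1, b_{r-1}), ..., (a_r, b_0)}`. -/
noncomputable def ussMon (K : Type*) [CommRing K] {n : ℕ} (A B : Finset (Fin n)) :
    MvPolynomial (SSVar n) K :=
  if h : A.card = B.card then
    if ∃ t : Fin A.card, (A.orderEmbOfFin rfl t : Fin n) = B.orderEmbOfFin h.symm t.rev then 0
    else
      ∏ v ∈ Finset.univ.filter (fun v : SSVar n => ∃ t : Fin A.card,
          (A.orderEmbOfFin rfl t = v.1.1 ∧ B.orderEmbOfFin h.symm t.rev = v.1.2) ∨
          (A.orderEmbOfFin rfl t = v.1.2 ∧ B.orderEmbOfFin h.symm t.rev = v.1.1)),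
        MvPolynomial.X v
  else 0

/-- The monomial ideal `J^ss_r` of a symmetric rank table `r`, generated by the monomials
`u^ss_{AB}` with `A ⊆ [i]`, `B ⊆ [j]`, `|A| = |B| = r(i,j) + 1` for some `n ≥ i ≥ j ≥ 1`. -/
noncomputable def JssIdealOfTable (K : Type*) [CommRing K] (n : ℕ) (r : ℕ → ℕ → ℕ) :
    Ideal (MvPolynomial (SSVar n) K) :=
  Ideal.span {g : MvPolynomial (SSVar n) K | ∃ (i j : ℕ) (A B : Finset (Fin n)),
    1 ≤ j ∧ j ≤ i ∧ i ≤ n ∧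
    (∀ a ∈ A, (a : ℕ) + 1 ≤ i) ∧ (∀ b ∈ B, (b : ℕ) + 1 ≤ j) ∧
    A.card = r i j + 1 ∧ B.card = r i j + 1 ∧ g = ussMon K A B}

/-- `J^ss_z = J^ss_{r_z}`. -/
noncomputable def JssIdeal (K : Type*) [CommRing K] (n : ℕ) (z : Equiv.Perm ℕ) :
    Ideal (MvPolynomial (SSVar n) K) :=
  JssIdealOfTable K n (rnk z)

/-- Total degree of a monomial (exponent vector). -/
def totalDeg {σ : Type*} (m : σ →₀ ℕ) : ℕ := m.sum fun _ e => e

/-- The lexicographic order on the variables `u_{ij}` by the pair `(i, j)`. -/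
def varLT {n : ℕ} (v w : SSVar n) : Prop :=
  v.1.1 < w.1.1 ∨ (v.1.1 = w.1.1 ∧ v.1.2 < w.1.2)

/-- The (graded) reverse lexicographic term order on monomials of `R_n`:
`m₁ < m₂` iff `deg m₁ < deg m₂`, or the degrees agree and the lexicographically largest
variable with different exponents has strictly larger exponent in `m₁`. -/
def revlexLT {n : ℕ} (m₁ m₂ : SSVar n →₀ ℕ) : Prop :=
  totalDeg m₁ < totalDeg m₂ ∨
    (totalDeg m₁ = totalDeg m₂ ∧ ∃ v, m₂ v < m₁ v ∧ ∀ w, varLT v w → m₁ w = m₂ w)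

/-- The initial ideal of `I` with respect to a strict term order `lt`: the ideal
generated by the leading monomials `init(f)` of the nonzero `f ∈ I`. -/
noncomputable def initIdeal {K : Type*} [CommRing K] {σ : Type*}
    (lt : (σ →₀ ℕ) → (σ →₀ ℕ) → Prop) (I : Ideal (MvPolynomial σ K)) :
    Ideal (MvPolynomial σ K) :=
  Ideal.span {g : MvPolynomial σ K | ∃ f ∈ I, f ≠ 0 ∧ ∃ m : σ →₀ ℕ, m ∈ f.support ∧
    (∀ m' ∈ f.support, m' ≠ m → lt m' m) ∧ g = MvPolynomial.monomial m (1 : K)}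

/-- A term order on the monomials of a polynomial ring: a linear order in which `1` is
the unique minimum and multiplication by a fixed monomial preserves order. -/
structure TermOrder (σ : Type*) where
  le : (σ →₀ ℕ) → (σ →₀ ℕ) → Prop
  trans : ∀ a b c, le a b → le b c → le a c
  antisymm : ∀ a b, le a b → le b a → a = b
  total : ∀ a b, le a b ∨ le b a
  zero_le : ∀ a, le 0 a
  add_le_add_right : ∀ a b c, le a b → le (a + c) (b + c)

/-- The initial ideal of `I` with respect to a term order `τ`. -/
noncomputable def initIdealLe {K : Type*} [CommRing K] {σ : Type*}
    (τ : TermOrder σ) (I : Ideal (MvPolynomial σ K)) : Ideal (MvPolynomial σ K) :=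
  Ideal.span {g : MvPolynomial σ K | ∃ f ∈ I, f ≠ 0 ∧ ∃ m : σ →₀ ℕ, m ∈ f.support ∧
    (∀ m' ∈ f.support, τ.le m' m) ∧ g = MvPolynomial.monomial m (1 : K)}

/-- An ideal is homogeneous (w.r.t. total degree) iff it contains all homogeneous
components of its elements. -/
def IsHomogIdeal {K : Type*} [CommSemiring K] {σ : Type*}
    (I : Ideal (MvPolynomial σ K)) : Prop :=
  ∀ f ∈ I, ∀ d : ℕ, MvPolynomial.homogeneousComponent d f ∈ I

/-- The reading order on boxes: rows top to bottom, each row right to left. -/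
def pdRel (p q : ℕ × ℕ) : Prop := p.1 < q.1 ∨ (p.1 = q.1 ∧ q.2 ≤ p.2)

instance : DecidableRel pdRel := fun p q => by unfold pdRel; infer_instance

instance : IsTrans (ℕ × ℕ) pdRel :=
  ⟨fun a b c hab hbc => by unfold pdRel at *; omega⟩

instance : IsAntisymm (ℕ × ℕ) pdRel :=
  ⟨fun a b hab hba => by
    unfold pdRel at hab hba
    exact Prod.ext_iff.mpr ⟨by omega, by omega⟩⟩

instance : IsTotal (ℕ × ℕ) pdRel :=
  ⟨fun a b => by unfold pdRel; omega⟩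

/-- The pipe dream reading word of a finite set `D` of boxes: the letters `i + j - 1`
over `(i, j) ∈ D`, in the order making `(i, -j)` increase lexicographically. -/
def pdWord (D : Finset (ℕ × ℕ)) : List ℕ :=
  (D.sort pdRel).map fun p => p.1 + p.2 - 1

/-- The product `s_{i_1} s_{i_2} ⋯ s_{i_l}` of simple transpositions. -/
def wordProd (l : List ℕ) : Equiv.Perm ℕ :=
  (l.map fun i => Equiv.swap i (i + 1)).prod

/-- `l` is a reduced word for `w`: a minimal-length word of positive letters whose
product of simple transpositions is `w`. -/
def IsReducedWordOf (w : Equiv.Perm ℕ) (l : List ℕ) : Prop :=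
  (∀ a ∈ l, 1 ≤ a) ∧ wordProd l = w ∧
    ∀ l' : List ℕ, (∀ a ∈ l', 1 ≤ a) → wordProd l' = w → l.length ≤ l'.length

/-- The set `RP(w)` of reduced pipe dreams for `w`. -/
def RP (w : Equiv.Perm ℕ) : Set (Finset (ℕ × ℕ)) :=
  {D | (∀ p ∈ D, 1 ≤ p.1 ∧ 1 ≤ p.2) ∧ IsReducedWordOf w (pdWord D)}

/-- `I^FPF_m`: involutions in `S_∞` that are fixed-point-free on `[m]` and fix
all `i > m`. -/
def IFPFm (m : ℕ) : Set (Equiv.Perm ℕ) :=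
  {y | y 0 = 0 ∧ y * y = 1 ∧ (∀ i, 1 ≤ i → i ≤ m → y i ≠ i) ∧ ∀ i, m < i → y i = i}

/-- `z = FPF_m(y)`: `z` agrees with `y` on `[m]` and swaps `m + 2k - 1, m + 2k`
for all `k ≥ 1`. -/
def IsFPFStdOf (m : ℕ) (y z : Equiv.Perm ℕ) : Prop :=
  (∀ i, i ≤ m → z i = y i) ∧
    ∀ k : ℕ, z (m + 2 * k + 1) = m + 2 * k + 2 ∧ z (m + 2 * k + 2) = m + 2 * k + 1

/-- The set `FP(z)` of fpf-involution pipe dreams for `z ∈ I^FPF_∞`. -/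
def FP (z : Equiv.Perm ℕ) : Set (Finset (ℕ × ℕ)) :=
  {E | ∃ (m : ℕ) (y : Equiv.Perm ℕ) (D : Finset (ℕ × ℕ)), Even m ∧ y ∈ IFPFm m ∧
    IsFPFStdOf m y z ∧ D ∈ RP y ∧ D.image Prod.swap = D ∧
    E = D.filter fun p => p.2 < p.1}

/-- The minor `det(U_{AB})` of the generic `m × n` matrix `U`, with rows `A` and
columns `B` listed in increasing order. -/
noncomputable def genMinor (K : Type*) [CommRing K] {m n : ℕ}
    (A : Finset (Fin m)) (B : Finset (Fin n)) (h : A.card = B.card) :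
    MvPolynomial (Fin m × Fin n) K :=
  (Matrix.of fun s t : Fin A.card =>
    (MvPolynomial.X (A.orderEmbOfFin rfl s, B.orderEmbOfFin h.symm t) :
      MvPolynomial (Fin m × Fin n) K)).det

/-- The antidiagonal monomial `u_{AB} = ∏_{(a,b) ∈ A ⊙ B} u_{ab}`. -/
noncomputable def genMon (K : Type*) [CommRing K] {m n : ℕ}
    (A : Finset (Fin m)) (B : Finset (Fin n)) (h : A.card = B.card) :
    MvPolynomial (Fin m × Fin n) K :=
  ∏ t : Fin A.card, MvPolynomial.X (A.orderEmbOfFin rfl t, B.orderEmbOfFin h.symm t.rev)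

/-- The exponent vector of the antidiagonal monomial `u_{AB}`. -/
noncomputable def antidiagExp {m n : ℕ} (A : Finset (Fin m)) (B : Finset (Fin n))
    (h : A.card = B.card) : (Fin m × Fin n) →₀ ℕ :=
  ∑ t : Fin A.card, Finsupp.single (A.orderEmbOfFin rfl t, B.orderEmbOfFin h.symm t.rev) 1

/-- The ideal `I_w`, generated by the minors `det(U_{AB})` with `A ⊆ [i]`, `B ⊆ [j]`,
`|A| = |B| = r_w(i,j) + 1` for some `(i,j) ∈ [m] × [n]`. -/
noncomputable def IwIdeal (K : Type*) [Field K] (m n : ℕ) (w : Equiv.Perm ℕ) :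
    Ideal (MvPolynomial (Fin m × Fin n) K) :=
  Ideal.span {g : MvPolynomial (Fin m × Fin n) K |
    ∃ (i j : ℕ) (A : Finset (Fin m)) (B : Finset (Fin n)) (h : A.card = B.card),
      1 ≤ i ∧ i ≤ m ∧ 1 ≤ j ∧ j ≤ n ∧ (∀ a ∈ A, (a : ℕ) + 1 ≤ i) ∧
      (∀ b ∈ B, (b : ℕ) + 1 ≤ j) ∧ A.card = rnk w i j + 1 ∧ g = genMinor K A B h}

/-- The monomial ideal `J_w`, generated by the monomials `u_{AB}` with `A ⊆ [i]`,
`B ⊆ [j]`, `|A| = |B| = r_w(i,j) + 1` for some `(i,j) ∈ [m] × [n]`. -/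
noncomputable def JwIdeal (K : Type*) [Field K] (m n : ℕ) (w : Equiv.Perm ℕ) :
    Ideal (MvPolynomial (Fin m × Fin n) K) :=
  Ideal.span {g : MvPolynomial (Fin m × Fin n) K |
    ∃ (i j : ℕ) (A : Finset (Fin m)) (B : Finset (Fin n)) (h : A.card = B.card),
      1 ≤ i ∧ i ≤ m ∧ 1 ≤ j ∧ j ≤ n ∧ (∀ a ∈ A, (a : ℕ) + 1 ≤ i) ∧
      (∀ b ∈ B, (b : ℕ) + 1 ≤ j) ∧ A.card = rnk w i j + 1 ∧ g = genMon K A B h}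

/-- The matrix Schubert variety
`X_w = {A ∈ Mat_{m×n} : rank A_{[i][j]} ≤ r_w(i,j) for all (i,j) ∈ [m] × [n]}`. -/
noncomputable def Xw (K : Type*) [Field K] (m n : ℕ) (w : Equiv.Perm ℕ) :
    Set (Matrix (Fin m) (Fin n) K) :=
  {A | ∀ (i j : ℕ) (hi : i ≤ m) (hj : j ≤ n), 1 ≤ i → 1 ≤ j →
    (A.submatrix (Fin.castLE hi) (Fin.castLE hj)).rank ≤ rnk w i j}

/-- `I(X_w)`: the ideal of polynomials vanishing on `X_w`. -/
noncomputable def IXw (K : Type*) [Field K] (m n : ℕ) (w : Equiv.Perm ℕ) :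
    Ideal (MvPolynomial (Fin m × Fin n) K) :=
  vanishingIdeal (Xw K m n w) fun A v => A v.1 v.2

/-- The variable `u_{pq}` (with `1 ≤ q < p ≤ n`) of `R_n`. -/
def ssvar {n : ℕ} (p q : ℕ) (hp : p ≤ n) (hq : 1 ≤ q) (hqp : q < p) : SSVar n :=
  ⟨(⟨p - 1, by omega⟩, ⟨q - 1, by omega⟩), Fin.mk_lt_mk.mpr (by omega)⟩

/-- Index set for the variables `u_{ij}`, `i > j ≥ 1`, over all positive integers. -/
abbrev PVar : Type := {p : ℕ × ℕ // 1 ≤ p.2 ∧ p.2 < p.1}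

/-- The generic skew-symmetric array `U^ss` over the positive integers:
`u_{xy}` if `x > y`, `-u_{yx}` if `x < y`, `0` if `x = y`. -/
noncomputable def UssP (K : Type*) [CommRing K] (x y : ℕ) : MvPolynomial PVar K :=
  if h : 1 ≤ y ∧ y < x then MvPolynomial.X ⟨(x, y), h⟩
  else if h' : 1 ≤ x ∧ x < y then -MvPolynomial.X ⟨(y, x), h'⟩
  else 0

/-- `pf(U^ss_{RR})` for a finite set `R` of positive integers. -/
noncomputable def pfUssP (K : Type*) [CommRing K] (R : Finset ℕ) : MvPolynomial PVar K :=
  Pfaffian (Matrix.of fun s t : Fin R.card =>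
    UssP K (R.orderEmbOfFin rfl s) (R.orderEmbOfFin rfl t))

/-- `g_{AB}`: the Pfaffian of the `(|B|+|A|) × (|B|+|A|)` skew-symmetric matrix whose
rows and columns are labeled by `B` (increasing) followed by `A` (increasing), with
entry `U^ss_{xy}` at a position labeled `(x, y)`, except that the entry is `0` when
both labels come from the `A`-block. -/
noncomputable def gAB (K : Type*) [CommRing K] (A B : Finset ℕ) : MvPolynomial PVar K :=
  Pfaffian ((Matrix.of fun p q : Fin B.card ⊕ Fin A.card =>
      match p, q with
      | Sum.inl s, Sum.inl t => UssP K (B.orderEmbOfFin rfl s) (B.orderEmbOfFin rfl t)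
      | Sum.inl s, Sum.inr t => UssP K (B.orderEmbOfFin rfl s) (A.orderEmbOfFin rfl t)
      | Sum.inr s, Sum.inl t => UssP K (A.orderEmbOfFin rfl s) (B.orderEmbOfFin rfl t)
      | Sum.inr _, Sum.inr _ => (0 : MvPolynomial PVar K)).submatrix
    finSumFinEquiv.symm finSumFinEquiv.symm)

/-- The exponent of the sign `⟨T, S⟩ = (-1)^{|S||T| + C(|S|,2) + ∑ of the (1-indexed)
positions in the increasing enumeration of `T` occupied by elements of `S`}`. -/
def setSgnExp (T S : Finset ℕ) : ℕ :=
  S.card * T.card + Nat.choose S.card 2 +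
    ∑ t : Fin T.card, if T.orderEmbOfFin rfl t ∈ S then (t : ℕ) + 1 else 0

/-!
Write the matrix as `f + g`, where `f` is the array `U^ss` read through the labels and `g` is `-f`
on the `A × A` block and `0` elsewhere. The Pfaffian of a sum expands over the ways of splitting
the index set in two, by splitting each matching into the arcs that use `f` and those that use `g`.
Since `g` vanishes on the rows of `B`, only the splittings `(B ⊔ S) ⊔ (A ∖ S)` with `S ⊆ A`
survive. If `S` meets `B`, the first part has two equal rows and its Pfaffian is `0`; otherwise
sorting it into `B ∪ S` costs the sign `⟨B ∪ S, S⟩`, and the splitting itself the sign `⟨A, S⟩`.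

All sign computations are products of signs over pairs of indices, grouped by pairs of arcs:
two arcs of a matching contribute a sign depending only on the relative order of their endpoints.
-/

section Signs

open Finset

variable (R : Type*) [CommRing R]

/-- The sign `-1` if `P` holds, and `1` otherwise. -/
def signIf (P : Prop) [Decidable P] : R := if P then -1 else 1

variable {R}

lemma signIf_mul_self (P : Prop) [Decidable P] : signIf R P * signIf R P = 1 := by
  by_cases hP : P <;> simp [signIf, hP]

lemma signIf_congr {P Q : Prop} [Decidable P] [Decidable Q] (h : P ↔ Q) :
    signIf R P = signIf R Q :=
  if_congr h rfl rfl

lemma prod_signIf {κ : Type*} (s : Finset κ) (P : κ → Prop) [DecidablePred P] :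
    ∏ i ∈ s, signIf R (P i) = (-1) ^ #{i ∈ s | P i} := by
  simp [signIf, prod_ite]

variable {ι γ δ : Type*} [LinearOrder γ] [LinearOrder δ]

variable (R) in
/-- The sign of the shuffle separating `S` from `T`: it counts the pairs `(x, y) ∈ S × T` such
that `x` sits before `y`, the position of an element `i` being `p i`. -/
def shuffleSign (p : ι → γ) (S T : Finset ι) : R :=
  ∏ x ∈ S, ∏ y ∈ T, signIf R (p x < p y)

lemma shuffleSign_mul_self (p : ι → γ) (S T : Finset ι) :
    shuffleSign R p S T * shuffleSign R p S T = 1 := by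
  simp only [shuffleSign, ← prod_mul_distrib, signIf_mul_self, prod_const_one]

variable (R) in
/-- The sign of the permutation which sorts, with respect to the positions `q`, the elements of
`T` listed in the order of their positions `p`. -/
def inversionSign (p : ι → γ) (q : ι → δ) (T : Finset ι) : R :=
  ∏ x ∈ T, ∏ y ∈ T, signIf R (p x < p y ∧ q y < q x)

variable [DecidableEq ι]

lemma prod_prod_union {M : Type*} [CommMonoid M] {T U : Finset ι} (hTU : Disjoint T U)
    (F : ι → ι → M) :
    ∏ x ∈ T ∪ U, ∏ y ∈ T ∪ U, F x y =
      (∏ x ∈ T, ∏ y ∈ U, F x y * F y x) * (∏ x ∈ T, ∏ y ∈ T, F x y) *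
        ∏ x ∈ U, ∏ y ∈ U, F x y := by
  simp only [prod_union hTU, prod_mul_distrib]
  rw [prod_comm (s := U)]
  ac_rfl

lemma inversionSign_union {p : ι → γ} {q : ι → δ} {T U : Finset ι} (hTU : Disjoint T U)
    (hp : Set.InjOn p ↑(T ∪ U)) (hq : Set.InjOn q ↑(T ∪ U)) :
    inversionSign R p q (T ∪ U) = shuffleSign R p T U * shuffleSign R q T U *
      inversionSign R p q T * inversionSign R p q U := by
  have hcross : ∏ x ∈ T, ∏ y ∈ U,
      signIf R (p x < p y ∧ q y < q x) * signIf R (p y < p x ∧ q x < q y) =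
        shuffleSign R p T U * shuffleSign R q T U := by
    simp only [shuffleSign, ← prod_mul_distrib]
    refine prod_congr rfl fun x hx => prod_congr rfl fun y hy => ?_
    have hne : x ≠ y := disjoint_iff_ne.mp hTU x hx y hy
    have hpxy : p x ≠ p y := hp.ne (by simp [hx]) (by simp [hy]) hne
    have hqxy : q x ≠ q y := hq.ne (by simp [hx]) (by simp [hy]) hne
    rcases hpxy.lt_or_gt with h | h <;> rcases hqxy.lt_or_gt with h' | h' <;>
      simp [signIf, h, h', h.not_gt, h'.not_gt]
  rw [inversionSign, prod_prod_union hTU, hcross, ← inversionSign, ← inversionSign]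

lemma inversionSign_pair (p : ι → γ) (q : ι → δ) {a b : ι} (hab : a ≠ b) :
    inversionSign R p q {a, b} =
      signIf R (p a < p b ∧ q b < q a) * signIf R (p b < p a ∧ q a < q b) := by
  simp [inversionSign, prod_pair hab, signIf]

lemma inversionSign_comp_swap {p : ι → γ} {T : Finset ι} (hp : Set.InjOn p T) {a b : ι}
    (ha : a ∈ T) (hb : b ∈ T) (hab : a ≠ b) :
    inversionSign R p (p ∘ Equiv.swap a b) T = -1 := by
  have hpair : inversionSign R p (p ∘ Equiv.swap a b) {a, b} = -1 := by
    rcases (hp.ne ha hb hab).lt_or_gt with h | h <;>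
      simp [inversionSign_pair p _ hab, signIf, h, h.not_gt]
  have hrest {x : ι} (hx : x ∈ T \ {a, b}) : Equiv.swap a b x = x := by
    simp only [mem_sdiff, mem_insert, mem_singleton, not_or] at hx
    exact Equiv.swap_apply_of_ne_of_ne hx.2.1 hx.2.2
  have hid : inversionSign R p (p ∘ Equiv.swap a b) (T \ {a, b}) = 1 :=
    prod_eq_one fun x hx => prod_eq_one fun y hy => by
      simp only [signIf, Function.comp_apply, hrest hx, hrest hy]
      exact if_neg fun h => h.1.not_gt h.2
  have hshuffle : shuffleSign R (p ∘ Equiv.swap a b) {a, b} (T \ {a, b}) =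
      shuffleSign R p {a, b} (T \ {a, b}) := by
    simp only [shuffleSign, prod_pair hab, Function.comp_apply, Equiv.swap_apply_left,
      Equiv.swap_apply_right]
    rw [mul_comm]
    congr 1 <;> exact prod_congr rfl fun y hy => by rw [hrest hy]
  have hT : {a, b} ∪ T \ {a, b} = T :=
    union_sdiff_of_subset (by simp [insert_subset_iff, ha, hb])
  have hpswap : Set.InjOn (p ∘ Equiv.swap a b) T :=
    hp.comp (Equiv.swap a b).injective.injOn (Equiv.swap_bijOn_self (by simp [ha, hb])).mapsTo
  rw [← hT, inversionSign_union disjoint_sdiff (by rwa [hT]) (by rwa [hT]), hpair, hid,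
    hshuffle, shuffleSign_mul_self]
  ring

end Signs

section Matchings

open Finset

variable {ι : Type*} {z w : ι → ι} {T U : Finset ι}

/-- `z` restricts to a fixed-point-free involution of `T`, which we view as a perfect matching
joining each `i ∈ T` to `z i` by an arc. The values of `z` outside `T` are irrelevant. -/
structure IsMatchingOn (z : ι → ι) (T : Finset ι) : Prop where
  mapsTo : ∀ i ∈ T, z i ∈ T
  apply_apply : ∀ i ∈ T, z (z i) = i
  apply_ne : ∀ i ∈ T, z i ≠ i

namespace IsMatchingOn

lemma congr (hz : IsMatchingOn z T) (hzw : ∀ i ∈ T, w i = z i) : IsMatchingOn w T where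
  mapsTo i hi := by simpa only [hzw i hi] using hz.mapsTo i hi
  apply_apply i hi := by rw [hzw i hi, hzw _ (hz.mapsTo i hi), hz.apply_apply i hi]
  apply_ne i hi := by simpa only [hzw i hi] using hz.apply_ne i hi

lemma mono (hT : IsMatchingOn z T) (hUT : U ⊆ T) (hU : ∀ i ∈ U, z i ∈ U) : IsMatchingOn z U :=
  ⟨hU, fun i hi => hT.apply_apply i (hUT hi), fun i hi => hT.apply_ne i (hUT hi)⟩

variable [DecidableEq ι]

lemma union (hT : IsMatchingOn z T) (hU : IsMatchingOn z U) : IsMatchingOn z (T ∪ U) := by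
  constructor <;> intro i hi <;> rcases mem_union.mp hi with hi | hi
  · exact mem_union_left _ (hT.mapsTo i hi)
  · exact mem_union_right _ (hU.mapsTo i hi)
  · exact hT.apply_apply i hi
  · exact hU.apply_apply i hi
  · exact hT.apply_ne i hi
  · exact hU.apply_ne i hi

lemma sdiff (hT : IsMatchingOn z T) (hU : IsMatchingOn z U) : IsMatchingOn z (T \ U) :=
  hT.mono sdiff_subset fun i hi => by
    rw [mem_sdiff] at hi ⊢
    exact ⟨hT.mapsTo i hi.1, fun h => hi.2 (hT.apply_apply i hi.1 ▸ hU.mapsTo _ h)⟩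

lemma arc_subset (hT : IsMatchingOn z T) {a : ι} (ha : a ∈ T) : {a, z a} ⊆ T := by
  simp [insert_subset_iff, ha, hT.mapsTo a ha]

lemma arc (hT : IsMatchingOn z T) {a : ι} (ha : a ∈ T) : IsMatchingOn z {a, z a} :=
  hT.mono (hT.arc_subset ha) (by simp [hT.apply_apply a ha])

@[elab_as_elim]
theorem induction_on_arcs {motive : (T : Finset ι) → IsMatchingOn z T → Prop}
    (empty : ∀ h, motive ∅ h)
    (arc_union : ∀ a U (ha : IsMatchingOn z {a, z a}) (hU : IsMatchingOn z U),
      Disjoint {a, z a} U → motive U hU → motive ({a, z a} ∪ U) (ha.union hU))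
    {T : Finset ι} (hT : IsMatchingOn z T) : motive T hT := by
  induction T using Finset.strongInduction with
  | H T ih =>
    rcases T.eq_empty_or_nonempty with rfl | ⟨a, ha⟩
    · exact empty hT
    · have hrest : T \ {a, z a} ⊂ T := sdiff_ssubset (hT.arc_subset ha) (by simp)
      have hmatch : IsMatchingOn z (T \ {a, z a}) := hT.sdiff (hT.arc ha)
      have := arc_union a _ (hT.arc ha) hmatch disjoint_sdiff (ih _ hrest hmatch)
      simpa only [union_sdiff_of_subset (hT.arc_subset ha)] using this

end IsMatchingOn

@[to_additive]
lemma IsMatchingOn.prod_eq_prod {M : Type*} [CommMonoid M] (hT : IsMatchingOn z T) {g h : ι → M}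
    (hgh : ∀ i ∈ T, g i * g (z i) = h i * h (z i)) : ∏ i ∈ T, g i = ∏ i ∈ T, h i := by
  classical
  induction hT using IsMatchingOn.induction_on_arcs with
  | empty => rfl
  | arc_union a U ha _ hdisj ih =>
    have hne : a ≠ z a := (ha.apply_ne a (mem_insert_self _ _)).symm
    rw [prod_union hdisj, prod_union hdisj, prod_pair hne, prod_pair hne,
      hgh a (mem_union_left _ (mem_insert_self _ _)),
      ih fun i hi => hgh i (mem_union_right _ hi)]

variable {κ : Type*} [DecidableEq κ] {e : ι → κ}

lemma isMatchingOn_image_iff {w : κ → κ} (he : Set.InjOn e T) (hz : ∀ x ∈ T, z x ∈ T)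
    (hw : ∀ x ∈ T, w (e x) = e (z x)) : IsMatchingOn w (T.image e) ↔ IsMatchingOn z T := by
  have happly : ∀ x ∈ T, w (w (e x)) = e (z (z x)) := fun x hx => by
    rw [hw x hx, hw _ (hz x hx)]
  constructor
  · refine fun h => ⟨hz, fun x hx => ?_, fun x hx hzx => ?_⟩
    · exact he (hz _ (hz x hx)) hx (happly x hx ▸ h.apply_apply _ (mem_image_of_mem e hx))
    · exact h.apply_ne _ (mem_image_of_mem e hx) (by rw [hw x hx, hzx])
  · refine fun h => ⟨?_, ?_, ?_⟩ <;> refine forall_mem_image.mpr fun x hx => ?_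
    · exact hw x hx ▸ mem_image_of_mem e (hz x hx)
    · rw [happly x hx, h.apply_apply x hx]
    · exact hw x hx ▸ he.ne (hz x hx) hx (h.apply_ne x hx)

variable [DecidableEq ι]

/-- The fixed-point-free involutions of `T`, extended by the identity outside `T`. -/
def matchings (T : Finset ι) : Finset (Equiv.Perm ι) :=
  {z ∈ permsOfFinset T | ∀ i ∈ T, z i ≠ i ∧ z (z i) = i}

lemma mem_matchings {z : Equiv.Perm ι} :
    z ∈ matchings T ↔ IsMatchingOn z T ∧ ∀ i ∉ T, z i = i := by
  rw [matchings, mem_filter, mem_perms_of_finset_iff]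
  constructor
  · rintro ⟨hfix, hT⟩
    refine ⟨⟨fun i hi => hfix ?_, fun i hi => (hT i hi).2, fun i hi => (hT i hi).1⟩,
      fun i hi => not_not.mp (mt hfix hi)⟩
    exact z.injective.ne (hT i hi).1
  · rintro ⟨hT, hfix⟩
    exact ⟨fun {i} hi => not_not.mp (mt (hfix i) hi),
      fun i hi => ⟨hT.apply_ne i hi, hT.apply_apply i hi⟩⟩

lemma matchings_ext {z w : Equiv.Perm ι} (hz : z ∈ matchings T) (hw : w ∈ matchings T)
    (hzw : ∀ i ∈ T, z i = w i) : z = w := by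
  ext i
  by_cases hi : i ∈ T
  · exact hzw i hi
  · rw [(mem_matchings.mp hz).2 i hi, (mem_matchings.mp hw).2 i hi]

lemma IsMatchingOn.exists_mem_matchings (hT : IsMatchingOn z T) :
    ∃ w ∈ matchings T, ∀ i ∈ T, w i = z i := by
  have hinv : Function.Involutive (T.piecewise z id) := fun i => by
    by_cases hi : i ∈ T <;> simp [hi, hT.mapsTo, hT.apply_apply]
  have hagree : ∀ i ∈ T, hinv.toPerm _ i = z i := fun i hi => by simp [hi]
  exact ⟨hinv.toPerm _, mem_matchings.mpr ⟨hT.congr hagree, fun i hi => by simp [hi]⟩, hagree⟩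

lemma exists_pullback_mem_matchings (he : Set.InjOn e T) {w : Equiv.Perm κ}
    (hw : w ∈ matchings (T.image e)) : ∃ z ∈ matchings T, ∀ x ∈ T, w (e x) = e (z x) := by
  have hw := (mem_matchings.mp hw).1
  have hlift (x : ι) : ∃ y, x ∈ T → y ∈ T ∧ e y = w (e x) := by
    by_cases hx : x ∈ T
    · simpa [hx] using hw.mapsTo _ (mem_image_of_mem e hx)
    · exact ⟨x, fun h => absurd h hx⟩
  choose z hz using hlift
  obtain ⟨z', hz', hagree⟩ := ((isMatchingOn_image_iff he (fun x hx => (hz x hx).1)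
    fun x hx => (hz x hx).2.symm).mp hw).exists_mem_matchings
  exact ⟨z', hz', fun x hx => by rw [hagree x hx, (hz x hx).2]⟩

lemma exists_pushforward_mem_matchings (he : Set.InjOn e T) {z : Equiv.Perm ι}
    (hz : z ∈ matchings T) : ∃ w ∈ matchings (T.image e), ∀ x ∈ T, w (e x) = e (z x) := by
  have hz := (mem_matchings.mp hz).1
  have hdesc (b : κ) : ∃ c, ∀ x ∈ T, e x = b → c = e (z x) := by
    by_cases hb : b ∈ T.image e
    · obtain ⟨y, hy, rfl⟩ := mem_image.mp hb
      exact ⟨e (z y), fun x hx hxy => by rw [he hx hy hxy]⟩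
    · exact ⟨b, fun x hx hxb => absurd (hxb ▸ mem_image_of_mem e hx) hb⟩
  choose w hw using hdesc
  have hwe : ∀ x ∈ T, w (e x) = e (z x) := fun x hx => hw _ x hx rfl
  obtain ⟨w', hw', hagree⟩ :=
    ((isMatchingOn_image_iff he hz.mapsTo hwe).mpr hz).exists_mem_matchings
  exact ⟨w', hw', fun x hx => by rw [hagree _ (mem_image_of_mem e hx), hwe x hx]⟩

end Matchings

section MatchingTerm

open Finset

variable {ι γ δ R : Type*} [LinearOrder γ] [LinearOrder δ] [CommRing R]
  {p : ι → γ} {q : ι → δ} {f : ι → ι → R} {z : ι → ι} {T U : Finset ι}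

/-- The condition on `(x, y)` counted by `ellFpfFin`, for elements with positions `p`. -/
def Linked (p : ι → γ) (z : ι → ι) (x y : ι) : Prop :=
  p y < p x ∧ p y < p (z x) ∧ p x < p (z y)

instance (p : ι → γ) (z : ι → ι) (x y : ι) : Decidable (Linked p z x y) :=
  inferInstanceAs (Decidable (_ ∧ _ ∧ _))

/-- The elements of `T` which are the later endpoint of their arc in the matching `z`. -/
def closers (p : ι → γ) (z : ι → ι) (T : Finset ι) : Finset ι := {i ∈ T | p (z i) < p i}

variable (R) in
/-- The sign `(-1) ^ ℓ`, where `ℓ` is the number of linked pairs in `T`. -/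
def linkSign (p : ι → γ) (z : ι → ι) (T : Finset ι) : R :=
  ∏ x ∈ T, ∏ y ∈ T, signIf R (Linked p z x y)

/-- The contribution of the matching `z` to the Pfaffian of the array `f` on `T`, the elements of
`T` being ordered by their positions `p`. -/
def matchingTerm (T : Finset ι) (p : ι → γ) (f : ι → ι → R) (z : ι → ι) : R :=
  linkSign R p z T * ∏ i ∈ closers p z T, f (z i) i

lemma matchingTerm_empty (p : ι → γ) (f : ι → ι → R) (z : ι → ι) : matchingTerm ∅ p f z = 1 := by
  simp [matchingTerm, linkSign, closers]

lemma signIf_linked_of_four_ne {x y : ι} (hx : z (z x) = x) (hy : z (z y) = y)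
    (hxx : p x ≠ p (z x)) (hyy : p y ≠ p (z y)) (h₁ : p x ≠ p y) (h₂ : p x ≠ p (z y))
    (h₃ : p (z x) ≠ p y) (h₄ : p (z x) ≠ p (z y)) :
    signIf R (Linked p z x y) * signIf R (Linked p z y x) *
        (signIf R (Linked p z x (z y)) * signIf R (Linked p z (z y) x)) *
      (signIf R (Linked p z (z x) y) * signIf R (Linked p z y (z x)) *
        (signIf R (Linked p z (z x) (z y)) * signIf R (Linked p z (z y) (z x)))) =
      signIf R (p x < p y) * signIf R (p x < p (z y)) *
        (signIf R (p (z x) < p y) * signIf R (p (z x) < p (z y))) := by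
  simp only [Linked, hx, hy]
  rcases hxx.lt_or_gt with h | h <;> rcases hyy.lt_or_gt with h' | h' <;>
    rcases h₁.lt_or_gt with h₁ | h₁ <;> rcases h₂.lt_or_gt with h₂ | h₂ <;>
    rcases h₃.lt_or_gt with h₃ | h₃ <;> rcases h₄.lt_or_gt with h₄ | h₄ <;>
    first
    | order
    | simp [signIf, h₁, h₂, h₃, h₄, h₁.not_gt, h₂.not_gt, h₃.not_gt, h₄.not_gt]

lemma prod_signIf_linked [DecidableEq ι] (hTz : IsMatchingOn z T) (hUz : IsMatchingOn z U)
    (hTU : Disjoint T U) (hp : Set.InjOn p ↑(T ∪ U)) :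
    ∏ x ∈ T, ∏ y ∈ U, signIf R (Linked p z x y) * signIf R (Linked p z y x) =
      shuffleSign R p T U := by
  have hpTU {x y : ι} (hx : x ∈ T) (hy : y ∈ U) : p x ≠ p y :=
    hp.ne (by simp [hx]) (by simp [hy]) (disjoint_iff_ne.mp hTU x hx y hy)
  have hpT : Set.InjOn p T := hp.mono (coe_subset.mpr subset_union_left)
  have hpU : Set.InjOn p U := hp.mono (coe_subset.mpr subset_union_right)
  refine hTz.prod_eq_prod fun x hx => ?_
  simp only [← prod_mul_distrib]
  refine hUz.prod_eq_prod fun y hy => ?_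
  have key := signIf_linked_of_four_ne (R := R) (hTz.apply_apply x hx) (hUz.apply_apply y hy)
    (hpT.ne hx (hTz.mapsTo x hx) (hTz.apply_ne x hx).symm)
    (hpU.ne hy (hUz.mapsTo y hy) (hUz.apply_ne y hy).symm)
    (hpTU hx hy) (hpTU hx (hUz.mapsTo y hy)) (hpTU (hTz.mapsTo x hx) hy)
    (hpTU (hTz.mapsTo x hx) (hUz.mapsTo y hy))
  linear_combination key

lemma linkSign_union [DecidableEq ι] (hTz : IsMatchingOn z T) (hUz : IsMatchingOn z U)
    (hTU : Disjoint T U) (hp : Set.InjOn p ↑(T ∪ U)) :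
    linkSign R p z (T ∪ U) = shuffleSign R p T U * linkSign R p z T * linkSign R p z U := by
  rw [linkSign, prod_prod_union hTU, prod_signIf_linked hTz hUz hTU hp, linkSign, linkSign]

lemma matchingTerm_union [DecidableEq ι] (hTz : IsMatchingOn z T) (hUz : IsMatchingOn z U)
    (hTU : Disjoint T U) (hp : Set.InjOn p ↑(T ∪ U)) (f : ι → ι → R) :
    matchingTerm (T ∪ U) p f z =
      shuffleSign R p T U * matchingTerm T p f z * matchingTerm U p f z := by
  have hclosers : ∏ i ∈ closers p z (T ∪ U), f (z i) i =
      (∏ i ∈ closers p z T, f (z i) i) * ∏ i ∈ closers p z U, f (z i) i := by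
    rw [closers, filter_union, prod_union (disjoint_filter_filter hTU), closers, closers]
  rw [matchingTerm, linkSign_union hTz hUz hTU hp, hclosers, matchingTerm, matchingTerm]
  ring

lemma matchingTerm_arc [DecidableEq ι] {a : ι} (hp : p a ≠ p (z a))
    (ha : IsMatchingOn z {a, z a}) (f : ι → ι → R) :
    matchingTerm {a, z a} p f z = if p (z a) < p a then f (z a) a else f a (z a) := by
  have hza : z (z a) = a := ha.apply_apply a (by simp)
  have hne : a ≠ z a := fun h => hp (congrArg p h)
  rcases hp.lt_or_gt with h | h <;>
    simp [matchingTerm, linkSign, closers, Linked, signIf, filter_insert, filter_singleton,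
      prod_pair hne, hza, h, h.not_gt]

lemma matchingTerm_reorder (hz : IsMatchingOn z T) (hp : Set.InjOn p T) (hq : Set.InjOn q T)
    (hf : ∀ i j, f i j = -f j i) :
    matchingTerm T q f z = inversionSign R p q T * matchingTerm T p f z := by
  classical
  induction hz using IsMatchingOn.induction_on_arcs with
  | empty => simp [matchingTerm_empty, inversionSign]
  | arc_union a U ha hU hdisj ih =>
    have hpa : p a ≠ p (z a) := hp.ne (by simp) (by simp) (ha.apply_ne a (by simp)).symm
    have hqa : q a ≠ q (z a) := hq.ne (by simp) (by simp) (ha.apply_ne a (by simp)).symm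
    have harc : matchingTerm {a, z a} q f z =
        inversionSign R p q {a, z a} * matchingTerm {a, z a} p f z := by
      rw [matchingTerm_arc hpa ha, matchingTerm_arc hqa ha,
        inversionSign_pair p q (ha.apply_ne a (by simp)).symm]
      rcases hpa.lt_or_gt with h | h <;> rcases hqa.lt_or_gt with h' | h' <;>
        simp [signIf, h, h', h.not_gt, h'.not_gt, hf (z a) a]
    have hrest := ih (hp.mono (coe_subset.mpr subset_union_right))
      (hq.mono (coe_subset.mpr subset_union_right))
    rw [matchingTerm_union ha hU hdisj hq, matchingTerm_union ha hU hdisj hp, harc, hrest,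
      inversionSign_union hdisj hp hq]
    linear_combination (-shuffleSign R q {a, z a} U * inversionSign R p q {a, z a} *
      matchingTerm {a, z a} p f z * inversionSign R p q U * matchingTerm U p f z) *
        shuffleSign_mul_self (R := R) p {a, z a} U

end MatchingTerm

section PfaffianOn

open Finset

variable {ι κ γ δ R : Type*} [LinearOrder γ] [LinearOrder δ] [CommRing R]
  {p : ι → γ} {q : ι → δ} {f : ι → ι → R} {z : ι → ι} {T : Finset ι}

lemma two_mul_card_closers (hz : IsMatchingOn z T) (hp : Set.InjOn p T) :
    2 * #(closers p z T) = #T := by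
  have hcount : ∑ i ∈ T, (if p (z i) < p i then 2 else 0) = ∑ _i ∈ T, 1 := by
    refine hz.sum_eq_sum fun i hi => ?_
    rw [hz.apply_apply i hi]
    rcases (hp.ne hi (hz.mapsTo i hi) (hz.apply_ne i hi).symm).lt_or_gt with h | h <;>
      simp [h, h.not_gt]
  rw [card_eq_sum_ones T, ← hcount, ← sum_filter, sum_const, smul_eq_mul, mul_comm, closers]

lemma matchingTerm_neg (hz : IsMatchingOn z T) (hp : Set.InjOn p T) (f : ι → ι → R) :
    matchingTerm T p (-f) z = (-1) ^ (#T / 2) * matchingTerm T p f z := by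
  have hcard : #T / 2 = #(closers p z T) := by
    have := two_mul_card_closers hz hp
    lia
  rw [matchingTerm, matchingTerm, hcard]
  simp only [Pi.neg_apply, prod_neg]
  ring

lemma matchingTerm_eq_zero (hz : IsMatchingOn z T) (hp : Set.InjOn p T) {a : ι} (ha : a ∈ T)
    (hf : f a (z a) = 0) (hf' : f (z a) a = 0) : matchingTerm T p f z = 0 := by
  have hclosers : ∏ i ∈ closers p z T, f (z i) i = 0 := by
    rcases (hp.ne ha (hz.mapsTo a ha) (hz.apply_ne a ha).symm).lt_or_gt with h | h
    · refine prod_eq_zero (i := z a) ?_ ?_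
      · simp [closers, hz.mapsTo a ha, hz.apply_apply a ha, h]
      · rw [hz.apply_apply a ha, hf]
    · exact prod_eq_zero (i := a) (by simp [closers, ha, h]) hf'
  rw [matchingTerm, hclosers, mul_zero]

lemma matchingTerm_image [DecidableEq κ] {e : ι → κ} (he : Set.InjOn e T) {w : κ → κ}
    (hw : ∀ x ∈ T, w (e x) = e (z x)) (p : κ → γ) (f : κ → κ → R) :
    matchingTerm (T.image e) p f w = matchingTerm T (p ∘ e) (fun i j => f (e i) (e j)) z := by
  have hclosers : closers p w (T.image e) = (closers (p ∘ e) z T).image e := by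
    rw [closers, filter_image, closers]
    exact congrArg _ (filter_congr fun x hx => by rw [hw x hx, Function.comp, Function.comp])
  have hsub : closers (p ∘ e) z T ⊆ T := filter_subset _ _
  rw [matchingTerm, matchingTerm, linkSign, linkSign, hclosers, prod_image he,
    prod_image (he.mono hsub)]
  congr 1
  · refine prod_congr rfl fun x hx => ?_
    rw [prod_image he]
    exact prod_congr rfl fun y hy => signIf_congr (by simp [Linked, hw x hx, hw y hy])
  · exact prod_congr rfl fun i hi => by rw [hw i (hsub hi)]

lemma matchingTerm_congr {w : ι → ι} (hw : ∀ x ∈ T, w x = z x) (p : ι → γ) (f : ι → ι → R) :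
    matchingTerm T p f w = matchingTerm T p f z := by
  classical
  simpa using matchingTerm_image (e := id) (Set.injOn_id _) hw p f

variable [DecidableEq ι]

/-- The Pfaffian of the array `f` on `T`, the elements of `T` being ordered by their positions
`p`. -/
def pfaffianOn (T : Finset ι) (p : ι → γ) (f : ι → ι → R) : R :=
  ∑ z ∈ matchings T, matchingTerm T p f z

lemma pfaffianOn_reorder (hp : Set.InjOn p T) (hq : Set.InjOn q T) (hf : ∀ i j, f i j = -f j i) :
    pfaffianOn T q f = inversionSign R p q T * pfaffianOn T p f := by
  rw [pfaffianOn, pfaffianOn, mul_sum]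
  exact sum_congr rfl fun z hz => matchingTerm_reorder (mem_matchings.mp hz).1 hp hq hf

lemma pfaffianOn_comp_strictMono {φ : γ → δ} (hφ : StrictMono φ) (T : Finset ι) (p : ι → γ)
    (f : ι → ι → R) : pfaffianOn T (φ ∘ p) f = pfaffianOn T p f := by
  have hlinked (z : ι → ι) (x y : ι) : Linked (φ ∘ p) z x y ↔ Linked p z x y := by
    simp [Linked, hφ.lt_iff_lt]
  simp only [pfaffianOn, matchingTerm, linkSign, closers, Function.comp_apply, hφ.lt_iff_lt,
    signIf_congr (hlinked _ _ _)]

lemma pfaffianOn_eq_zero_of_odd (hp : Set.InjOn p T) (hT : Odd #T) (f : ι → ι → R) :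
    pfaffianOn T p f = 0 := by
  refine sum_eq_zero fun _ hz => absurd hT (Nat.not_odd_iff_even.mpr ?_)
  rw [← two_mul_card_closers (mem_matchings.mp hz).1 hp]
  exact even_two_mul _

lemma pfaffianOn_neg (hp : Set.InjOn p T) (f : ι → ι → R) :
    pfaffianOn T p (-f) = (-1) ^ (#T / 2) * pfaffianOn T p f := by
  rw [pfaffianOn, pfaffianOn, mul_sum]
  exact sum_congr rfl fun z hz => matchingTerm_neg (mem_matchings.mp hz).1 hp f

lemma pfaffianOn_eq_zero_of_row_eq_zero (hp : Set.InjOn p T) {a : ι} (ha : a ∈ T)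
    (hrow : ∀ i, f a i = 0) (hcol : ∀ i, f i a = 0) : pfaffianOn T p f = 0 :=
  sum_eq_zero fun _ hz => matchingTerm_eq_zero (mem_matchings.mp hz).1 hp ha (hrow _) (hcol _)

lemma pfaffianOn_congr {g : ι → ι → R} (h : ∀ i ∈ T, ∀ j ∈ T, f i j = g i j) :
    pfaffianOn T p f = pfaffianOn T p g := by
  refine sum_congr rfl fun _ hz => congrArg _ (prod_congr rfl fun i hi => ?_)
  have hiT : i ∈ T := filter_subset _ _ hi
  exact h _ ((mem_matchings.mp hz).1.mapsTo i hiT) i hiT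

lemma pfaffianOn_image [DecidableEq κ] {e : ι → κ} (he : Set.InjOn e T) (p : κ → γ)
    (f : κ → κ → R) :
    pfaffianOn (T.image e) p f = pfaffianOn T (p ∘ e) fun i j => f (e i) (e j) := by
  refine sum_bij (fun w hw => (exists_pullback_mem_matchings he hw).choose) ?_ ?_ ?_ ?_ <;>
    intro w hw
  · exact (exists_pullback_mem_matchings he hw).choose_spec.1
  · intro w' hw' heq
    refine matchings_ext hw hw' (forall_mem_image.mpr fun x hx => ?_)
    rw [(exists_pullback_mem_matchings he hw).choose_spec.2 x hx,
      (exists_pullback_mem_matchings he hw').choose_spec.2 x hx, heq]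
  · obtain ⟨w', hw', hagree⟩ := exists_pushforward_mem_matchings he hw
    have hspec := (exists_pullback_mem_matchings he hw').choose_spec
    refine ⟨w', hw', matchings_ext hspec.1 hw fun x hx => ?_⟩
    exact he ((mem_matchings.mp hspec.1).1.mapsTo x hx) ((mem_matchings.mp hw).1.mapsTo x hx)
      (hspec.2 x hx ▸ hagree x hx)
  · exact matchingTerm_image he (exists_pullback_mem_matchings he hw).choose_spec.2 p f

end PfaffianOn

section EqualRows

open Finset

variable {ι γ R : Type*} [DecidableEq ι] [LinearOrder γ] [CommRing R]
  {p : ι → γ} {f : ι → ι → R} {T : Finset ι} {a b : ι}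

lemma image_swap_of_mem (ha : a ∈ T) (hb : b ∈ T) : T.image (Equiv.swap a b) = T := by
  rw [← coe_inj, coe_image]
  exact (Equiv.swap_bijOn_self (by simp [ha, hb])).image_eq

lemma conj_swap_mem_matchings (ha : a ∈ T) (hb : b ∈ T) {z : Equiv.Perm ι}
    (hz : z ∈ matchings T) : Equiv.swap a b * z * Equiv.swap a b ∈ matchings T := by
  obtain ⟨hz, hfix⟩ := mem_matchings.mp hz
  refine mem_matchings.mpr ⟨?_, fun i hi => ?_⟩
  · have := isMatchingOn_image_iff (w := ⇑(Equiv.swap a b * z * Equiv.swap a b))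
      (Equiv.swap a b).injective.injOn hz.mapsTo (by simp)
    rwa [image_swap_of_mem ha hb, iff_true_intro hz, iff_true] at this
  · have hswap : Equiv.swap a b i = i :=
      Equiv.swap_apply_of_ne_of_ne (fun h => hi (h ▸ ha)) fun h => hi (h ▸ hb)
    simp [hswap, hfix i hi]

lemma matchingTerm_conj_swap (hp : Set.InjOn p T) (hf : ∀ i j, f i j = -f j i) (ha : a ∈ T)
    (hb : b ∈ T) (hab : a ≠ b) (hrow : ∀ i, f a i = f b i) {z : Equiv.Perm ι}
    (hz : z ∈ matchings T) :
    matchingTerm T p f (Equiv.swap a b * z * Equiv.swap a b : Equiv.Perm ι) =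
      -matchingTerm T p f z := by
  have hrow_swap (i j : ι) : f (Equiv.swap a b i) j = f i j := by
    rw [Equiv.swap_apply_def]
    split_ifs with h h <;> simp [h, hrow]
  have hf_swap : (fun i j => f (Equiv.swap a b i) (Equiv.swap a b j)) = f := by
    ext i j
    rw [hrow_swap, hf, hrow_swap, ← hf]
  have himage := matchingTerm_image (Equiv.swap a b).injective.injOn (T := T) (z := z)
    (w := ⇑(Equiv.swap a b * z * Equiv.swap a b)) (by simp) p f
  have hpswap : Set.InjOn (p ∘ Equiv.swap a b) T :=
    hp.comp (Equiv.swap a b).injective.injOn (Equiv.swap_bijOn_self (by simp [ha, hb])).mapsTo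
  rw [image_swap_of_mem ha hb, hf_swap] at himage
  rw [himage, matchingTerm_reorder (mem_matchings.mp hz).1 hp hpswap hf,
    inversionSign_comp_swap hp ha hb hab, neg_one_mul]

theorem pfaffianOn_eq_zero_of_rows_eq (hp : Set.InjOn p T) (hf : ∀ i j, f i j = -f j i)
    (hdiag : ∀ i, f i i = 0) (ha : a ∈ T) (hb : b ∈ T) (hab : a ≠ b)
    (hrow : ∀ i, f a i = f b i) : pfaffianOn T p f = 0 := by
  refine sum_involution (fun z _ => Equiv.swap a b * z * Equiv.swap a b) (fun z hz => ?_)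
    (fun z hz hterm hconj => ?_) (fun z hz => conj_swap_mem_matchings ha hb hz)
    fun z _ => by simp [mul_assoc]
  · rw [matchingTerm_conj_swap hp hf ha hb hab hrow hz, add_neg_cancel]
  · have hz := (mem_matchings.mp hz).1
    have hza : z a ≠ b := fun h => hterm <| by
      have hfab : f a (z a) = 0 := by rw [h, hrow, hdiag]
      exact matchingTerm_eq_zero hz hp ha hfab (by rw [hf, hfab, neg_zero])
    have hzb : z b ≠ a := fun h => hza (h ▸ hz.apply_apply b hb)
    have hconj_apply : (Equiv.swap a b * z * Equiv.swap a b) a = z b := by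
      simp [Equiv.swap_apply_of_ne_of_ne hzb (hz.apply_ne b hb)]
    exact hab (z.injective (by rw [← hconj_apply, hconj]))

end EqualRows

section Addition

open Finset

variable {ι γ R : Type*} [DecidableEq ι] [LinearOrder γ] [CommRing R]
  {p : ι → γ} {T U V : Finset ι}

lemma closers_union_image {z : ι → ι} (hz : IsMatchingOn z T) {t : Finset ι}
    (ht : t ⊆ closers p z T) : closers p z (t ∪ t.image z) = t := by
  ext i
  simp only [closers, mem_filter, mem_union, mem_image]
  constructor
  · rintro ⟨hi | ⟨j, hj, rfl⟩, hlt⟩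
    · exact hi
    · obtain ⟨hjT, hjlt⟩ := mem_filter.mp (ht hj)
      rw [hz.apply_apply j hjT] at hlt
      exact absurd hlt hjlt.not_gt
  · exact fun hi => ⟨Or.inl hi, (mem_filter.mp (ht hi)).2⟩

lemma closers_union_image_closers {z : ι → ι} (hz : IsMatchingOn z U) (hp : Set.InjOn p U) :
    closers p z U ∪ (closers p z U).image z = U := by
  ext i
  simp only [closers, mem_union, mem_image, mem_filter]
  constructor
  · rintro (⟨hi, _⟩ | ⟨j, ⟨hj, _⟩, rfl⟩)
    · exact hi
    · exact hz.mapsTo j hj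
  · intro hi
    rcases (hp.ne hi (hz.mapsTo i hi) (hz.apply_ne i hi).symm).lt_or_gt with h | h
    · exact Or.inr ⟨z i, ⟨hz.mapsTo i hi, by rwa [hz.apply_apply i hi]⟩, hz.apply_apply i hi⟩
    · exact Or.inl ⟨hi, h⟩

lemma prod_closers_add {z : ι → ι} (hz : IsMatchingOn z T) (hp : Set.InjOn p T) (f g : ι → R) :
    ∏ i ∈ closers p z T, (f i + g i) = ∑ U ∈ T.powerset with ∀ i ∈ U, z i ∈ U,
      (∏ i ∈ closers p z U, f i) * ∏ i ∈ closers p z (T \ U), g i := by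
  rw [prod_add]
  refine (sum_nbij' (closers p z) (fun t => t ∪ t.image z) ?_ ?_ ?_ ?_ ?_).symm
  · intro U hU
    exact mem_powerset.mpr (filter_subset_filter _ (mem_powerset.mp (mem_filter.mp hU).1))
  · intro t ht
    have htT : t ⊆ T := (mem_powerset.mp ht).trans (filter_subset _ _)
    refine mem_filter.mpr ⟨mem_powerset.mpr (union_subset htT ?_), fun i hi => ?_⟩
    · exact image_subset_iff.mpr fun i hi => hz.mapsTo i (htT hi)
    · rcases mem_union.mp hi with hi | hi
      · exact mem_union_right _ (mem_image_of_mem z hi)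
      · obtain ⟨j, hj, rfl⟩ := mem_image.mp hi
        exact mem_union_left _ (by rwa [hz.apply_apply j (htT hj)])
  · intro U hU
    have hUT : U ⊆ T := mem_powerset.mp (mem_filter.mp hU).1
    exact closers_union_image_closers (hz.mono hUT (mem_filter.mp hU).2) (hp.mono hUT)
  · exact fun t ht => closers_union_image hz (mem_powerset.mp ht)
  · intro U _
    have hsdiff : closers p z (T \ U) = closers p z T \ closers p z U := by
      ext i
      simp only [closers, mem_filter, mem_sdiff]
      tauto
    rw [hsdiff]

lemma matchingTerm_add {z : ι → ι} (hz : IsMatchingOn z T) (hp : Set.InjOn p T)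
    (f g : ι → ι → R) :
    matchingTerm T p (f + g) z = ∑ U ∈ T.powerset with ∀ i ∈ U, z i ∈ U,
      shuffleSign R p U (T \ U) * (matchingTerm U p f z * matchingTerm (T \ U) p g z) := by
  simp only [matchingTerm, Pi.add_apply]
  rw [prod_closers_add hz hp, mul_sum]
  refine sum_congr rfl fun U hU => ?_
  have hUT : U ⊆ T := mem_powerset.mp (mem_filter.mp hU).1
  have hUz : IsMatchingOn z U := hz.mono hUT (mem_filter.mp hU).2
  have hsign := linkSign_union (R := R) (p := p) hUz (hz.sdiff hUz) disjoint_sdiff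
    (by rwa [union_sdiff_of_subset hUT])
  rw [union_sdiff_of_subset hUT] at hsign
  rw [hsign]
  ring

lemma matchings_mul_apply_left {w v : Equiv.Perm ι} (hv : v ∈ matchings V) (hUV : Disjoint U V) :
    ∀ i ∈ U, (w * v) i = w i := fun i hi => by
  rw [Equiv.Perm.mul_apply, (mem_matchings.mp hv).2 i (disjoint_left.mp hUV hi)]

lemma matchings_mul_apply_right {w v : Equiv.Perm ι} (hw : w ∈ matchings U)
    (hv : v ∈ matchings V) (hUV : Disjoint U V) : ∀ i ∈ V, (w * v) i = v i := fun i hi =>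
  (mem_matchings.mp hw).2 _ (disjoint_right.mp hUV ((mem_matchings.mp hv).1.mapsTo i hi))

lemma mul_mem_matchings {w v : Equiv.Perm ι} (hw : w ∈ matchings U) (hv : v ∈ matchings V)
    (hUV : Disjoint U V) : w * v ∈ matchings (U ∪ V) := by
  refine mem_matchings.mpr ⟨?_, fun i hi => ?_⟩
  · exact ((mem_matchings.mp hw).1.congr (matchings_mul_apply_left hv hUV)).union
      ((mem_matchings.mp hv).1.congr (matchings_mul_apply_right hw hv hUV))
  · rw [mem_union, not_or] at hi
    rw [Equiv.Perm.mul_apply, (mem_matchings.mp hv).2 i hi.2, (mem_matchings.mp hw).2 i hi.1]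

lemma sum_matchings_union {M : Type*} [AddCommMonoid M] (hUV : Disjoint U V)
    (F : Equiv.Perm ι → M) :
    ∑ z ∈ matchings (U ∪ V) with ∀ i ∈ U, z i ∈ U, F z =
      ∑ w ∈ matchings U, ∑ v ∈ matchings V, F (w * v) := by
  rw [← sum_product']
  refine (sum_bij (fun wv _ => wv.1 * wv.2) ?_ ?_ ?_ fun _ _ => rfl).symm
  · rintro ⟨w, v⟩ hwv
    obtain ⟨hw, hv⟩ := mem_product.mp hwv
    refine mem_filter.mpr ⟨mul_mem_matchings hw hv hUV, fun i hi => ?_⟩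
    rw [matchings_mul_apply_left hv hUV i hi]
    exact (mem_matchings.mp hw).1.mapsTo i hi
  · rintro ⟨w, v⟩ hwv ⟨w', v'⟩ hwv' heq
    obtain ⟨hw, hv⟩ := mem_product.mp hwv
    obtain ⟨hw', hv'⟩ := mem_product.mp hwv'
    dsimp only at heq hw hv hw' hv'
    have hww' : w = w' := matchings_ext hw hw' fun i hi => by
      rw [← matchings_mul_apply_left hv hUV i hi, heq, matchings_mul_apply_left hv' hUV i hi]
    have hvv' : v = v' := matchings_ext hv hv' fun i hi => by
      rw [← matchings_mul_apply_right hw hv hUV i hi, heq,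
        matchings_mul_apply_right hw' hv' hUV i hi]
    rw [hww', hvv']
  · intro z hz
    obtain ⟨hz, hU⟩ := mem_filter.mp hz
    have hUz : IsMatchingOn z U := (mem_matchings.mp hz).1.mono subset_union_left hU
    have hVz : IsMatchingOn z V := by
      simpa only [union_sdiff_cancel_left hUV] using (mem_matchings.mp hz).1.sdiff hUz
    obtain ⟨w, hw, hwz⟩ := hUz.exists_mem_matchings
    obtain ⟨v, hv, hvz⟩ := hVz.exists_mem_matchings
    refine ⟨(w, v), mem_product.mpr ⟨hw, hv⟩, ?_⟩
    refine matchings_ext (mul_mem_matchings hw hv hUV) hz fun i hi => ?_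
    rcases mem_union.mp hi with hi | hi
    · rw [matchings_mul_apply_left hv hUV i hi, hwz i hi]
    · rw [matchings_mul_apply_right hw hv hUV i hi, hvz i hi]

theorem pfaffianOn_add (hp : Set.InjOn p T) (f g : ι → ι → R) :
    pfaffianOn T p (f + g) = ∑ U ∈ T.powerset,
      shuffleSign R p U (T \ U) * (pfaffianOn U p f * pfaffianOn (T \ U) p g) := by
  have hexpand : pfaffianOn T p (f + g) =
      ∑ U ∈ T.powerset, ∑ z ∈ matchings T with ∀ i ∈ U, z i ∈ U,
        shuffleSign R p U (T \ U) * (matchingTerm U p f z * matchingTerm (T \ U) p g z) := by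
    rw [pfaffianOn, sum_congr rfl fun z hz => matchingTerm_add (mem_matchings.mp hz).1 hp f g]
    exact sum_comm' fun z U => by simp only [mem_filter]; tauto
  rw [hexpand]
  refine sum_congr rfl fun U hU => ?_
  rw [← mul_sum, pfaffianOn, pfaffianOn, sum_mul_sum]
  have hglue := sum_matchings_union (disjoint_sdiff (s := U) (t := T)) fun z =>
    matchingTerm U p f z * matchingTerm (T \ U) p g z
  rw [union_sdiff_of_subset (mem_powerset.mp hU)] at hglue
  rw [hglue]
  refine congrArg _ (sum_congr rfl fun w hw => sum_congr rfl fun v hv => ?_)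
  rw [matchingTerm_congr (matchings_mul_apply_left hv disjoint_sdiff),
    matchingTerm_congr (matchings_mul_apply_right hw hv disjoint_sdiff)]

lemma sum_powerset_union_filter_subset {N : Type*} [AddCommMonoid N] {M L : Finset ι}
    (hML : Disjoint M L) (F : Finset ι → N) :
    ∑ U ∈ (M ∪ L).powerset with M ⊆ U, F U = ∑ S ∈ L.powerset, F (M ∪ S) := by
  rw [← Icc_eq_filter_powerset, Icc_eq_image_powerset subset_union_left,
    union_sdiff_cancel_left hML, sum_image]
  intro S hS S' hS' heq
  have hdisj {X : Finset ι} (hX : X ∈ L.powerset) : Disjoint M X :=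
    hML.mono_right (mem_powerset.mp hX)
  rw [← union_sdiff_cancel_left (hdisj hS), ← union_sdiff_cancel_left (hdisj hS')]
  exact congrArg (· \ M) heq

/-- The array `f` with its entries on `L × L` replaced by `0`. -/
def zeroOn (L : Finset ι) (f : ι → ι → R) (i j : ι) : R := if i ∈ L ∧ j ∈ L then 0 else f i j

theorem pfaffianOn_zeroOn {M L : Finset ι} (hML : Disjoint M L) (hp : Set.InjOn p ↑(M ∪ L))
    (f : ι → ι → R) :
    pfaffianOn (M ∪ L) p (zeroOn L f) = ∑ S ∈ L.powerset,
      shuffleSign R p (M ∪ S) (L \ S) *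
        (pfaffianOn (M ∪ S) p f * ((-1) ^ (#(L \ S) / 2) * pfaffianOn (L \ S) p f)) := by
  set g : ι → ι → R := fun i j => if i ∈ L ∧ j ∈ L then -f i j else 0 with hg
  have hsplit : zeroOn L f = f + g := by
    ext i j
    by_cases h : i ∈ L ∧ j ∈ L <;> simp [zeroOn, hg, h]
  have hvanish : ∀ U ∈ (M ∪ L).powerset, ¬ M ⊆ U →
      shuffleSign R p U ((M ∪ L) \ U) * (pfaffianOn U p f * pfaffianOn ((M ∪ L) \ U) p g) = 0 := by
    intro U _ hMU
    obtain ⟨a, haM, haU⟩ := not_subset.mp hMU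
    have haL : a ∉ L := disjoint_left.mp hML haM
    rw [pfaffianOn_eq_zero_of_row_eq_zero (hp.mono (coe_subset.mpr sdiff_subset))
      (mem_sdiff.mpr ⟨mem_union_left L haM, haU⟩) (by simp [hg, haL]) (by simp [hg, haL]),
      mul_zero, mul_zero]
  rw [hsplit, pfaffianOn_add hp, ← sum_filter_of_ne fun U hU => not_imp_comm.mp (hvanish U hU),
    sum_powerset_union_filter_subset hML]
  refine sum_congr rfl fun S _ => ?_
  have hcompl : (M ∪ L) \ (M ∪ S) = L \ S := by
    exact sdiff_sdiff_left.symm.trans (congrArg (· \ S) (union_sdiff_cancel_left hML))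
  have hneg : pfaffianOn (L \ S) p g = pfaffianOn (L \ S) p (-f) :=
    pfaffianOn_congr fun i hi j hj =>
      if_pos ⟨(mem_sdiff.mp hi).1, (mem_sdiff.mp hj).1⟩
  rw [hcompl, hneg, pfaffianOn_neg (hp.mono ?_)]
  exact coe_subset.mpr (sdiff_subset.trans subset_union_right)

end Addition

section Matrices

open Finset

variable {ι γ R : Type*} [DecidableEq ι] [LinearOrder γ] [CommRing R]

lemma Pfaffian_eq_pfaffianOn_univ {N : ℕ} (f : Fin N → Fin N → R) :
    Pfaffian (Matrix.of f) = pfaffianOn univ id f := by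
  refine sum_congr ?_ fun z _ => ?_
  · ext z
    simp only [mem_filter, mem_univ, true_and, mem_matchings, not_true_eq_false, false_implies,
      implies_true, and_true]
    exact ⟨fun h => ⟨fun i _ => mem_univ _, fun i _ => h.2 i, fun i _ => h.1 i⟩,
      fun h => ⟨fun i => h.apply_ne i (mem_univ i), fun i => h.apply_apply i (mem_univ i)⟩⟩
  · rw [matchingTerm, linkSign, ← prod_product', prod_signIf, univ_product_univ]
    rfl

lemma Pfaffian_of_strictMono {N : ℕ} {p : ι → γ} {e : Fin N → ι} (he : StrictMono (p ∘ e))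
    (f : ι → ι → R) :
    Pfaffian (Matrix.of fun k l => f (e k) (e l)) = pfaffianOn (univ.image e) p f := by
  rw [pfaffianOn_image he.injective.of_comp.injOn, Pfaffian_eq_pfaffianOn_univ]
  exact (pfaffianOn_comp_strictMono he univ id _).symm

variable {α : Type*} [LinearOrder α]

/-- The Pfaffian of the matrix with entries `f x y`, its rows and columns being labelled by the
elements of `C` in increasing order. It specialises to `pfUssP`. -/
noncomputable def sortedPfaffian (f : α → α → R) (C : Finset α) : R :=
  Pfaffian (Matrix.of fun s t : Fin C.card =>
    f (C.orderEmbOfFin rfl s) (C.orderEmbOfFin rfl t))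

/-- The Pfaffian of the matrix with rows and columns labelled by `B` followed by `A`, each in
increasing order, and with entries `f x y` except for a zero `A × A` block. It specialises to
`gAB`. -/
noncomputable def zeroBlockPfaffian (f : α → α → R) (A B : Finset α) : R :=
  Pfaffian ((Matrix.of fun p q : Fin B.card ⊕ Fin A.card =>
      match p, q with
      | Sum.inl s, Sum.inl t => f (B.orderEmbOfFin rfl s) (B.orderEmbOfFin rfl t)
      | Sum.inl s, Sum.inr t => f (B.orderEmbOfFin rfl s) (A.orderEmbOfFin rfl t)
      | Sum.inr s, Sum.inl t => f (A.orderEmbOfFin rfl s) (B.orderEmbOfFin rfl t)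
      | Sum.inr _, Sum.inr _ => (0 : R)).submatrix
    finSumFinEquiv.symm finSumFinEquiv.symm)

/-- The element of `α` labelling a row of `zeroBlockPfaffian`; rows are indexed by `α ⊕ α`, with
`B` in the left summand and `A` in the right one. -/
def blockLabel : α ⊕ α → α := Sum.elim id id

lemma sortedPfaffian_eq_pfaffianOn (f : α → α → R) (C : Finset α) :
    sortedPfaffian f C = pfaffianOn C id f := by
  conv_rhs => rw [← image_orderEmbOfFin_univ C rfl]
  exact Pfaffian_of_strictMono (p := id) (C.orderEmbOfFin rfl).strictMono f

lemma strictMono_toLex_map_finSumFinEquiv_symm {m n : ℕ} {b : Fin m → α} {a : Fin n → α}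
    (hb : StrictMono b) (ha : StrictMono a) :
    StrictMono (toLex ∘ Sum.map b a ∘ finSumFinEquiv.symm) := by
  intro k l hkl
  obtain ⟨x, rfl⟩ := finSumFinEquiv.surjective k
  obtain ⟨y, rfl⟩ := finSumFinEquiv.surjective l
  simp only [Function.comp_apply, Equiv.symm_apply_apply]
  rcases x with x | x <;> rcases y with y | y <;>
    simp [Fin.lt_def, -Fin.val_fin_lt, hb.lt_iff_lt, ha.lt_iff_lt] at hkl ⊢ <;> lia

lemma zeroBlockPfaffian_eq_pfaffianOn (f : α → α → R) (A B : Finset α) :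
    zeroBlockPfaffian f A B = pfaffianOn (B.disjSum A) toLex
      (zeroOn (A.image Sum.inr) fun x y => f (blockLabel x) (blockLabel y)) := by
  set emb : Fin #B ⊕ Fin #A → α ⊕ α := Sum.map (B.orderEmbOfFin rfl) (A.orderEmbOfFin rfl)
    with hemb
  have hmono : StrictMono (toLex ∘ emb ∘ finSumFinEquiv.symm) :=
    strictMono_toLex_map_finSumFinEquiv_symm (B.orderEmbOfFin rfl).strictMono
      (A.orderEmbOfFin rfl).strictMono
  have himage : univ.image (emb ∘ finSumFinEquiv.symm) = B.disjSum A := by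
    rw [← image_image, image_univ_equiv, ← univ_disjSum_univ]
    have hrange (C : Finset α) (x : α) : (∃ k, C.orderEmbOfFin rfl k = x) ↔ x ∈ C := by
      rw [← Set.mem_range, range_orderEmbOfFin, mem_coe]
    ext (x | x) <;> simp [hemb, hrange]
  rw [← himage, ← Pfaffian_of_strictMono hmono, zeroBlockPfaffian]
  congr 1
  ext k l
  rcases hk : finSumFinEquiv.symm k with x | x <;> rcases hl : finSumFinEquiv.symm l with y | y <;>
    simp [hemb, zeroOn, blockLabel, hk, hl]

end Matrices

section SubsetSign

open Finset

variable {α R : Type*} [LinearOrder α] [CommRing R]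

/-- The exponent of the sign `⟨T, S⟩`; it specialises to `setSgnExp`. The enumeration of `T` is
`0`-indexed, hence the `+ 1`. -/
def subsetSignExp (T S : Finset α) : ℕ :=
  S.card * T.card + Nat.choose S.card 2 +
    ∑ t : Fin T.card, if T.orderEmbOfFin rfl t ∈ S then (t : ℕ) + 1 else 0

lemma card_filter_le_orderEmbOfFin (T : Finset α) (t : Fin #T) :
    #{y ∈ T | y ≤ T.orderEmbOfFin rfl t} = t + 1 := by
  have himage : {y ∈ T | y ≤ T.orderEmbOfFin rfl t} =
      (Iic t).map (T.orderEmbOfFin rfl).toEmbedding := by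
    conv_lhs => enter [2]; rw [← map_orderEmbOfFin_univ T rfl]
    rw [filter_map]
    congr 1
    ext k
    simp
  rw [himage, card_map, Fin.card_Iic]

lemma sum_index_orderEmbOfFin {S T : Finset α} (hST : S ⊆ T) :
    ∑ t : Fin #T, (if T.orderEmbOfFin rfl t ∈ S then (t : ℕ) + 1 else 0) =
      ∑ x ∈ S, #{y ∈ T | y ≤ x} := by
  calc ∑ t : Fin #T, (if T.orderEmbOfFin rfl t ∈ S then (t : ℕ) + 1 else 0)
      = ∑ x ∈ T, if x ∈ S then #{y ∈ T | y ≤ x} else 0 := by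
        conv_rhs => enter [1]; rw [← map_orderEmbOfFin_univ T rfl]
        rw [sum_map]
        exact sum_congr rfl fun t _ => by rw [← card_filter_le_orderEmbOfFin]; rfl
    _ = ∑ x ∈ S, #{y ∈ T | y ≤ x} := by
        rw [sum_ite_mem, inter_eq_right.mpr hST]

lemma sum_card_filter_lt (S : Finset α) : ∑ x ∈ S, #{y ∈ S | x < y} = (#S).choose 2 := by
  induction S using Finset.induction_on_max with
  | empty => simp
  | insert m S hm ih =>
    have hmS : m ∉ S := fun h => (hm m h).false
    have hmax : #{y ∈ insert m S | m < y} = 0 := by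
      simpa [filter_eq_empty_iff] using fun y hy => (hm y hy).le
    have hstep : ∀ x ∈ S, #{y ∈ insert m S | x < y} = #{y ∈ S | x < y} + 1 := fun x hx => by
      rw [filter_insert, if_pos (hm x hx), card_insert_of_notMem (by simp [hmS])]
    rw [sum_insert hmS, hmax, sum_congr rfl hstep, sum_add_distrib, ih, card_insert_of_notMem hmS,
      Nat.choose_succ_succ' _ 1]
    simp [add_comm]

lemma subsetSignExp_add_sum_card {S T : Finset α} (hST : S ⊆ T) :
    subsetSignExp T S + ∑ x ∈ S, #{y ∈ T \ S | x < y} = 2 * (#S * #T) := by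
  have hsplit : ∀ x ∈ S,
      #{y ∈ T | y ≤ x} + (#{y ∈ S | x < y} + #{y ∈ T \ S | x < y}) = #T := fun x _ => by
    rw [← card_union_of_disjoint (disjoint_filter_filter disjoint_sdiff), ← filter_union,
      union_sdiff_of_subset hST, ← card_filter_add_card_filter_not (s := T) (· ≤ x)]
    simp
  have hsum := sum_congr rfl hsplit
  rw [sum_add_distrib, sum_add_distrib, sum_card_filter_lt, sum_const, smul_eq_mul] at hsum
  rw [subsetSignExp, sum_index_orderEmbOfFin hST]
  lia

theorem neg_one_pow_subsetSignExp {S T : Finset α} (hST : S ⊆ T) :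
    (-1 : R) ^ subsetSignExp T S = shuffleSign R id S (T \ S) := by
  simp only [shuffleSign, prod_signIf, prod_pow_eq_pow_sum, id]
  have hsum := subsetSignExp_add_sum_card hST
  exact neg_one_pow_congr (by grind)

end SubsetSign

section Expansion

open Finset

variable {α R : Type*} [LinearOrder α] [CommRing R] {f : α → α → R} {A B S : Finset α}

lemma pfaffianOn_zeroOn_disjSum (A B : Finset α) (F : α ⊕ α → α ⊕ α → R) :
    pfaffianOn (B.disjSum A) toLex (zeroOn (A.image Sum.inr) F) =
      ∑ S ∈ A.powerset, shuffleSign R toLex (B.disjSum S) ((A \ S).image Sum.inr) *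
        (pfaffianOn (B.disjSum S) toLex F *
          ((-1) ^ (#(A \ S) / 2) * pfaffianOn ((A \ S).image Sum.inr) toLex F)) := by
  have hunion (S : Finset α) : B.image Sum.inl ∪ S.image Sum.inr = B.disjSum S := by
    ext (x | x) <;> simp
  have hdisj : Disjoint (B.image Sum.inl) (A.image (Sum.inr : α → α ⊕ α)) := by
    simp [disjoint_left]
  rw [← hunion, pfaffianOn_zeroOn hdisj toLex.injective.injOn, powerset_image,
    sum_image (image_injective Sum.inr_injective).injOn]
  refine sum_congr rfl fun S _ => ?_
  rw [hunion, ← image_sdiff _ _ Sum.inr_injective, card_image_of_injective _ Sum.inr_injective]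

lemma pfaffianOn_image_inr (C : Finset α) :
    pfaffianOn (C.image Sum.inr) toLex (fun x y => f (blockLabel x) (blockLabel y)) =
      sortedPfaffian f C := by
  rw [pfaffianOn_image Sum.inr_injective.injOn, sortedPfaffian_eq_pfaffianOn]
  exact pfaffianOn_comp_strictMono Sum.Lex.inr_strictMono C id f

lemma inversionSign_blockLabel_toLex (B S : Finset α) :
    inversionSign R blockLabel toLex (B.disjSum S) = shuffleSign R id S B := by
  have hcycle (x y : α) : ¬(x < y ∧ y < x) := fun h => h.1.not_gt h.2
  simp [inversionSign, shuffleSign, prod_disjSum, blockLabel, signIf, hcycle]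

lemma shuffleSign_toLex_disjSum (B S T : Finset α) :
    shuffleSign R toLex (B.disjSum S) (T.image Sum.inr) =
      (-1) ^ (#T * #B) * shuffleSign R id S T := by
  simp [shuffleSign, prod_disjSum, signIf, pow_mul]

lemma pfaffianOn_disjSum_eq_zero (hf : ∀ x y, f x y = -f y x) (hdiag : ∀ x, f x x = 0)
    (hBS : ¬ Disjoint B S) :
    pfaffianOn (B.disjSum S) toLex (fun x y => f (blockLabel x) (blockLabel y)) = 0 := by
  obtain ⟨x, hxB, hxS⟩ := not_disjoint_iff.mp hBS
  exact pfaffianOn_eq_zero_of_rows_eq toLex.injective.injOn (fun _ _ => hf _ _) (fun _ => hdiag _)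
    (inl_mem_disjSum.mpr hxB) (inr_mem_disjSum.mpr hxS) Sum.inl_ne_inr fun _ => rfl

lemma pfaffianOn_disjSum_of_disjoint (hf : ∀ x y, f x y = -f y x) (hBS : Disjoint B S) :
    pfaffianOn (B.disjSum S) toLex (fun x y => f (blockLabel x) (blockLabel y)) =
      shuffleSign R id S B * sortedPfaffian f (B ∪ S) := by
  have hinj : Set.InjOn blockLabel (B.disjSum S : Set (α ⊕ α)) := by
    rintro (x | x) hx (y | y) hy rfl <;>
      simp_all [blockLabel, disjoint_left]
  have himage : (B.disjSum S).image blockLabel = B ∪ S := by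
    ext x
    simp [blockLabel]
  rw [pfaffianOn_reorder hinj toLex.injective.injOn fun _ _ => hf _ _,
    inversionSign_blockLabel_toLex, sortedPfaffian_eq_pfaffianOn, ← himage,
    pfaffianOn_image hinj, Function.id_comp]

lemma sortedPfaffian_eq_zero_of_odd (hA : Odd #A) : sortedPfaffian f A = 0 := by
  rw [sortedPfaffian_eq_pfaffianOn, pfaffianOn_eq_zero_of_odd Function.injective_id.injOn hA]

theorem zeroBlockPfaffian_eq_sum_powerset (f : α → α → R) (A B : Finset α) :
    zeroBlockPfaffian f A B = ∑ S ∈ A.powerset,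
      (-1) ^ (#(A \ S) * #B) * shuffleSign R id S (A \ S) *
        (pfaffianOn (B.disjSum S) toLex (fun x y => f (blockLabel x) (blockLabel y)) *
          ((-1) ^ (#(A \ S) / 2) * sortedPfaffian f (A \ S))) := by
  simp only [zeroBlockPfaffian_eq_pfaffianOn, pfaffianOn_zeroOn_disjSum, pfaffianOn_image_inr,
    shuffleSign_toLex_disjSum]

lemma pfaffianOn_disjSum_mul_sortedPfaffian_eq_zero (hf : ∀ x y, f x y = -f y x)
    (hdiag : ∀ x, f x x = 0) (hSA : S ⊆ A)
    (hS : ¬(S ⊆ A \ B ∧ Even (#B + #S) ∧ Even (#A - #S))) :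
    pfaffianOn (B.disjSum S) toLex (fun x y => f (blockLabel x) (blockLabel y)) *
      sortedPfaffian f (A \ S) = 0 := by
  rw [subset_sdiff, ← card_sdiff_of_subset hSA] at hS
  by_cases hBS : Disjoint B S
  · rcases Nat.even_or_odd #(A \ S) with hAS | hAS
    · have hodd : Odd #(B ∪ S) := by
        rw [card_union_of_disjoint hBS, ← Nat.not_even_iff_odd]
        exact fun heven => hS ⟨⟨hSA, hBS.symm⟩, heven, hAS⟩
      rw [pfaffianOn_disjSum_of_disjoint hf hBS, sortedPfaffian_eq_zero_of_odd hodd, mul_zero,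
        zero_mul]
    · rw [sortedPfaffian_eq_zero_of_odd hAS, mul_zero]
  · rw [pfaffianOn_disjSum_eq_zero hf hdiag hBS, zero_mul]

theorem statement19_general (hf : ∀ x y, f x y = -f y x) (hdiag : ∀ x, f x x = 0)
    (A B : Finset α) :
    zeroBlockPfaffian f A B =
      ∑ S ∈ (A \ B).powerset.filter
          (fun S => Even (B.card + S.card) ∧ Even (A.card - S.card)),
        (-1 : R) ^ ((A.card - S.card) / 2) * (-1 : R) ^ subsetSignExp A S *
          (-1 : R) ^ subsetSignExp (B ∪ S) S *
          sortedPfaffian f (A \ S) * sortedPfaffian f (B ∪ S) := by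
  rw [zeroBlockPfaffian_eq_sum_powerset]
  symm
  refine sum_subset_zero_on_sdiff
    ((filter_subset _ _).trans (powerset_mono.mpr sdiff_subset)) (fun S hS => ?_) fun S hS => ?_
  · obtain ⟨hSA, hS⟩ := mem_sdiff.mp hS
    rw [mem_filter, mem_powerset] at hS
    linear_combination (-1) ^ (#(A \ S) * #B) * shuffleSign R id S (A \ S) *
      (-1) ^ (#(A \ S) / 2) *
        pfaffianOn_disjSum_mul_sortedPfaffian_eq_zero hf hdiag (mem_powerset.mp hSA) hS
  · obtain ⟨hS, -, hAS⟩ := mem_filter.mp hS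
    obtain ⟨hSA, hSB⟩ := subset_sdiff.mp (mem_powerset.mp hS)
    rw [← card_sdiff_of_subset hSA] at hAS ⊢
    rw [neg_one_pow_subsetSignExp hSA, neg_one_pow_subsetSignExp subset_union_right,
      union_sdiff_cancel_right hSB.symm, pfaffianOn_disjSum_of_disjoint hf hSB.symm,
      (hAS.mul_right #B).neg_one_pow]
    ring

end Expansion

section GenericArray

variable {K : Type*} [CommRing K]

lemma UssP_skew (x y : ℕ) : UssP K x y = -UssP K y x := by
  unfold UssP
  split_ifs <;> first | lia | simp

lemma UssP_self (x : ℕ) : UssP K x x = 0 := by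
  simp [UssP]

lemma gAB_eq_zeroBlockPfaffian (A B : Finset ℕ) :
    gAB K A B = zeroBlockPfaffian (UssP K) A B := by
  rw [gAB, zeroBlockPfaffian]
  congr 2
  ext (x | x) (y | y) <;> rfl

end GenericArray

/-- For finite sets `A`, `B` of positive integers with `|A| ≤ |B|`,
the Pfaffian `g_{AB}` expands as
`∑_S (-1)^{(|A|-|S|)/2} ⟨A,S⟩ ⟨B ⊔ S, S⟩ pf(U^ss_{A∖S,A∖S}) pf(U^ss_{B⊔S,B⊔S})`,
the sum being over subsets `S ⊆ A ∖ B` with `|B| + |S|` and `|A| - |S|` both even. -/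
theorem statement19 (K : Type*) [Field K] (A B : Finset ℕ)
    (hA : ∀ a ∈ A, 1 ≤ a) (hB : ∀ b ∈ B, 1 ≤ b) (hAB : A.card ≤ B.card) :
    gAB K A B =
      ∑ S ∈ (A \ B).powerset.filter
          (fun S => Even (B.card + S.card) ∧ Even (A.card - S.card)),
        (-1 : MvPolynomial PVar K) ^ ((A.card - S.card) / 2) *
          (-1 : MvPolynomial PVar K) ^ setSgnExp A S *
          (-1 : MvPolynomial PVar K) ^ setSgnExp (B ∪ S) S *
          pfUssP K (A \ S) * pfUssP K (B ∪ S) := by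
  rw [gAB_eq_zeroBlockPfaffian]
  exact statement19_general UssP_skew UssP_self A B

end Paper
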